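/- For any jointly distributed random variables X, Y, Π on finite sets, the internal information cost is at most the external information cost: I(Π;X|Y) + I(Π;Y|X) ≤ I(Π;X,Y), whenever Π is the transcript of a communication protocol on inputs (X,Y); in particular this follows from the identity I(Π;X,Y) - I(Π;X|Y) - I(Π;Y|X) = I(X;Y) - I(X;Y|Π) together with the monotonicity-of-correlation property I(X;Y|Π) ≤ I(X;Y) for protocol transcripts. -/

import Mathlib

open Finset

noncomputable section

/-- `p` is a probability mass function on the finite type `Ω`. -/
def IsPMF {Ω : Type*} [Fintype Ω] (p : Ω → ℝ) : Prop :=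
  (∀ ω, 0 ≤ p ω) ∧ ∑ ω, p ω = 1

/-- Probability that the random variable `X` equals `x` under `p`. -/
def pr {Ω α : Type*} [Fintype Ω] [DecidableEq α] (p : Ω → ℝ) (X : Ω → α) (x : α) : ℝ :=
  ∑ ω, if X ω = x then p ω else 0

/-- Shannon entropy (base 2) of a distribution `q` on a finite type. -/
def Hq {α : Type*} [Fintype α] (q : α → ℝ) : ℝ :=
  ∑ x, -(q x * Real.logb 2 (q x))

/-- Shannon entropy (base 2) of the random variable `X` under `p`. -/
def Hent {Ω α : Type*} [Fintype Ω] [Fintype α] [DecidableEq α] (p : Ω → ℝ) (X : Ω → α) : ℝ :=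
  Hq (pr p X)

/-- Conditional entropy `H(X|Y) = H(X,Y) - H(Y)`. -/
def condH {Ω α β : Type*} [Fintype Ω] [Fintype α] [Fintype β] [DecidableEq α] [DecidableEq β]
    (p : Ω → ℝ) (X : Ω → α) (Y : Ω → β) : ℝ :=
  Hent p (fun ω => (X ω, Y ω)) - Hent p Y

/-- Mutual information `I(X;Y)`. -/
def MI {Ω α β : Type*} [Fintype Ω] [Fintype α] [Fintype β] [DecidableEq α] [DecidableEq β]
    (p : Ω → ℝ) (X : Ω → α) (Y : Ω → β) : ℝ :=
  Hent p X + Hent p Y - Hent p (fun ω => (X ω, Y ω))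

/-- Conditional mutual information `I(X;Y|Z) = H(X|Z) - H(X|(Y,Z))`. -/
def condMI {Ω α β γ : Type*} [Fintype Ω] [Fintype α] [Fintype β] [Fintype γ]
    [DecidableEq α] [DecidableEq β] [DecidableEq γ]
    (p : Ω → ℝ) (X : Ω → α) (Y : Ω → β) (Z : Ω → γ) : ℝ :=
  condH p X Z - condH p X (fun ω => (Y ω, Z ω))

/-- Total variation distance between distributions on a finite type. -/
def TV {α : Type*} [Fintype α] (q₁ q₂ : α → ℝ) : ℝ :=
  (∑ x, |q₁ x - q₂ x|) / 2

/-- Binary entropy function (base 2). -/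
def binEnt (d : ℝ) : ℝ :=
  -(d * Real.logb 2 d) - ((1 - d) * Real.logb 2 (1 - d))

/-- Min-entropy (base 2) of a distribution on a nonempty finite type. -/
def Hinf {α : Type*} [Fintype α] [Nonempty α] (q : α → ℝ) : ℝ :=
  -Real.logb 2 (⨆ x, q x)

/-- `A` and `B` are conditionally independent given `C` (zero conditional mutual
information), i.e. the Markov chain `A — C — B` holds. -/
def CondIndep {Ω α β γ : Type*} [Fintype Ω] [Fintype α] [Fintype β] [Fintype γ]
    [DecidableEq α] [DecidableEq β] [DecidableEq γ]
    (p : Ω → ℝ) (A : Ω → α) (B : Ω → β) (C : Ω → γ) : Prop :=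
  condMI p A B C = 0

/-- The prefix `Π^t = (Π₁,…,Π_t)` of the messages `Π`. -/
def prefixT {Ω γ : Type*} {r : ℕ} (Msg : Fin r → Ω → γ) (t : ℕ) (ht : t ≤ r) (ω : Ω) :
    Fin t → γ :=
  fun j => Msg (Fin.castLE ht j) ω

/-!
By the chain rule, `I(X; Y, M | Q)` splits both as `I(X; Y | Q) + I(X; M | Y, Q)` and as
`I(X; M | Q) + I(X; Y | M, Q)`. A message `M` that Bob computes from `Y`, the history `Q` and
private coins satisfies `I(X; M | Y, Q) = 0`, and `I(X; M | Q)` is nonnegative, so appending `M` to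
the history does not increase the mutual information between the inputs; messages of Alice are
symmetric. The chain rule for `I(Π; X, Y)` and for `I(X; Y, Π)` then turns the gap between external
and internal information into the correlation `I(X; Y) - I(X; Y | Π)` lost along the transcript.
-/

lemma sum_mul_logb_nonpos {Ω : Type*} [Fintype Ω] {p f : Ω → ℝ} {b : ℝ} (hb : 1 < b)
    (hp : ∀ ω, 0 ≤ p ω) (hf : ∀ ω, 0 < p ω → 0 < f ω)
    (hsum : ∑ ω, p ω * f ω ≤ ∑ ω, p ω) :
    ∑ ω, p ω * Real.logb b (f ω) ≤ 0 := by
  have hlog (ω : Ω) : p ω * Real.log (f ω) ≤ p ω * f ω - p ω := by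
    rcases (hp ω).eq_or_lt with hω | hω
    · simp [← hω]
    · rw [← mul_sub_one]
      exact mul_le_mul_of_nonneg_left (Real.log_le_sub_one_of_pos (hf ω hω)) hω.le
  simp only [Real.logb, ← mul_div_assoc, ← sum_div]
  refine div_nonpos_of_nonpos_of_nonneg ?_ (Real.log_nonneg hb.le)
  calc
    ∑ ω, p ω * Real.log (f ω) ≤ ∑ ω, (p ω * f ω - p ω) := sum_le_sum fun ω _ ↦ hlog ω
    _ = ∑ ω, p ω * f ω - ∑ ω, p ω := sum_sub_distrib ..
    _ ≤ 0 := sub_nonpos.mpr hsum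

section Distribution

variable {Ω α β γ : Type*} [Fintype Ω] [DecidableEq α] [DecidableEq β] [DecidableEq γ] {p : Ω → ℝ}

lemma pr_nonneg (hp : ∀ ω, 0 ≤ p ω) (X : Ω → α) (x : α) : 0 ≤ pr p X x :=
  sum_nonneg fun ω _ ↦ ite_nonneg (hp ω) le_rfl

lemma pr_apply_pos (hp : ∀ ω, 0 ≤ p ω) (X : Ω → α) {ω : Ω} (hω : 0 < p ω) :
    0 < pr p X (X ω) :=
  sum_pos' (fun ω' _ ↦ ite_nonneg (hp ω') le_rfl) ⟨ω, mem_univ ω, by simpa using hω⟩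

/-- The ratio of the coupling `p(a, c) p(b, c) / p(c)` that makes `A` and `B` conditionally
independent given `C` to the joint law `p(a, b, c)`; its value is `0` off the support of the joint
law. The expectation of `-log₂` of this ratio is `I(A; B | C)`. -/
def condIndepRatio (p : Ω → ℝ) (A : Ω → α) (B : Ω → β) (C : Ω → γ) : α × β × γ → ℝ :=
  fun (a, b, c) ↦ pr p (fun ω ↦ (A ω, C ω)) (a, c) * pr p (fun ω ↦ (B ω, C ω)) (b, c) /
    pr p C c / pr p (fun ω ↦ (A ω, B ω, C ω)) (a, b, c)

lemma condIndepRatio_apply_pos (hp : ∀ ω, 0 ≤ p ω) (A : Ω → α) (B : Ω → β) (C : Ω → γ) {ω : Ω}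
    (hω : 0 < p ω) : 0 < condIndepRatio p A B C (A ω, B ω, C ω) :=
  div_pos (div_pos (mul_pos (pr_apply_pos hp (fun ω ↦ (A ω, C ω)) hω)
    (pr_apply_pos hp (fun ω ↦ (B ω, C ω)) hω)) (pr_apply_pos hp C hω))
    (pr_apply_pos hp (fun ω ↦ (A ω, B ω, C ω)) hω)

variable [Fintype α]

lemma sum_pr_mul (p : Ω → ℝ) (X : Ω → α) (g : α → ℝ) :
    ∑ x, pr p X x * g x = ∑ ω, p ω * g (X ω) := by
  simp only [pr, sum_mul, ite_mul, zero_mul]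
  rw [sum_comm]
  simp

lemma sum_pr (p : Ω → ℝ) (X : Ω → α) : ∑ x, pr p X x = ∑ ω, p ω := by
  simpa using sum_pr_mul p X fun _ ↦ 1

lemma sum_pr_prodMk (p : Ω → ℝ) (X : Ω → α) (Y : Ω → β) (y : β) :
    ∑ x, pr p (fun ω ↦ (X ω, Y ω)) (x, y) = pr p Y y := by
  simp only [pr, Prod.mk.injEq, ite_and]
  rw [sum_comm]
  simp

lemma sum_pr_mul_condIndepRatio_le [Fintype β] [Fintype γ] (hp : ∀ ω, 0 ≤ p ω) (A : Ω → α)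
    (B : Ω → β) (C : Ω → γ) :
    ∑ x, pr p (fun ω ↦ (A ω, B ω, C ω)) x * condIndepRatio p A B C x ≤ ∑ ω, p ω := by
  have hle (x : α × β × γ) : pr p (fun ω ↦ (A ω, B ω, C ω)) x * condIndepRatio p A B C x ≤
      pr p (fun ω ↦ (A ω, C ω)) (x.1, x.2.2) * pr p (fun ω ↦ (B ω, C ω)) x.2 / pr p C x.2.2 := by
    rcases eq_or_ne (pr p (fun ω ↦ (A ω, B ω, C ω)) x) 0 with hx | hx
    · rw [hx, zero_mul]
      exact div_nonneg (mul_nonneg (pr_nonneg hp _ _) (pr_nonneg hp _ _)) (pr_nonneg hp _ _)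
    · exact (mul_div_cancel₀ _ hx).le
  calc
    _ ≤ ∑ x : α × β × γ, pr p (fun ω ↦ (A ω, C ω)) (x.1, x.2.2) *
          pr p (fun ω ↦ (B ω, C ω)) x.2 / pr p C x.2.2 := sum_le_sum fun x _ ↦ hle x
    _ = ∑ c, (∑ a, pr p (fun ω ↦ (A ω, C ω)) (a, c)) *
          (∑ b, pr p (fun ω ↦ (B ω, C ω)) (b, c)) / pr p C c := by
        simp only [Fintype.sum_prod_type, sum_mul_sum, sum_div]
        exact sum_comm_cycle
    _ = ∑ c, pr p C c := by simp only [sum_pr_prodMk, mul_self_div_self]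
    _ = ∑ ω, p ω := sum_pr p C

end Distribution

section Information

variable {Ω α β γ δ : Type*} [Fintype Ω] [Fintype α] [Fintype β] [Fintype γ] [Fintype δ]
  [DecidableEq α] [DecidableEq β] [DecidableEq γ] [DecidableEq δ] {p : Ω → ℝ}

lemma Hent_eq_neg_sum (p : Ω → ℝ) (X : Ω → α) :
    Hent p X = -∑ ω, p ω * Real.logb 2 (pr p X (X ω)) := by
  simp only [Hent, Hq, sum_neg_distrib, sum_pr_mul p X fun x ↦ Real.logb 2 (pr p X x)]

lemma Hent_congr (p : Ω → ℝ) {X : Ω → α} {Y : Ω → β}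
    (h : ∀ ω ω', X ω = X ω' ↔ Y ω = Y ω') : Hent p X = Hent p Y := by
  simp only [Hent_eq_neg_sum, pr, h]

lemma Hent_of_subsingleton [Subsingleton α] (hp : ∑ ω, p ω = 1) (X : Ω → α) :
    Hent p X = 0 := by
  have hpr (x : α) : pr p X x = 1 := by simp [pr, hp, Subsingleton.elim _ x]
  simp [Hent, Hq, hpr]

lemma condH_congr_right (p : Ω → ℝ) (X : Ω → α) {Y : Ω → β} {Z : Ω → γ}
    (h : ∀ ω ω', Y ω = Y ω' ↔ Z ω = Z ω') : condH p X Y = condH p X Z := by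
  have hpair : Hent p (fun ω ↦ (X ω, Y ω)) = Hent p (fun ω ↦ (X ω, Z ω)) :=
    Hent_congr p fun ω ω' ↦ by simp only [Prod.mk.injEq, h ω ω']
  rw [condH, condH, hpair, Hent_congr p h]

lemma condH_of_subsingleton [Subsingleton β] (hp : ∑ ω, p ω = 1) (X : Ω → α) (Y : Ω → β) :
    condH p X Y = Hent p X := by
  have hpair : Hent p (fun ω ↦ (X ω, Y ω)) = Hent p X :=
    Hent_congr p fun ω ω' ↦ by simp [Subsingleton.elim (Y ω) (Y ω')]
  rw [condH, hpair, Hent_of_subsingleton hp Y, sub_zero]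

lemma MI_eq_Hent_sub_condH (p : Ω → ℝ) (X : Ω → α) (Y : Ω → β) :
    MI p X Y = Hent p X - condH p X Y := by
  rw [MI, condH]
  ring

lemma MI_comm (p : Ω → ℝ) (X : Ω → α) (Y : Ω → β) : MI p X Y = MI p Y X := by
  have hpair : Hent p (fun ω ↦ (X ω, Y ω)) = Hent p (fun ω ↦ (Y ω, X ω)) :=
    Hent_congr p fun ω ω' ↦ by simp only [Prod.mk.injEq, and_comm]
  rw [MI, MI, hpair, add_comm (Hent p X)]

lemma condMI_comm (p : Ω → ℝ) (X : Ω → α) (Y : Ω → β) (Z : Ω → γ) :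
    condMI p X Y Z = condMI p Y X Z := by
  have htriple : Hent p (fun ω ↦ (X ω, Y ω, Z ω)) = Hent p (fun ω ↦ (Y ω, X ω, Z ω)) :=
    Hent_congr p fun ω ω' ↦ by simp only [Prod.mk.injEq, and_left_comm]
  simp only [condMI, condH, htriple]
  ring

lemma condMI_congr_right (p : Ω → ℝ) (X : Ω → α) (Y : Ω → β) {Z : Ω → γ} {W : Ω → δ}
    (h : ∀ ω ω', Z ω = Z ω' ↔ W ω = W ω') : condMI p X Y Z = condMI p X Y W := by
  have hpair : condH p X (fun ω ↦ (Y ω, Z ω)) = condH p X (fun ω ↦ (Y ω, W ω)) :=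
    condH_congr_right p X fun ω ω' ↦ by simp only [Prod.mk.injEq, h ω ω']
  rw [condMI, condMI, condH_congr_right p X h, hpair]

lemma condMI_of_subsingleton [Subsingleton γ] (hp : ∑ ω, p ω = 1) (X : Ω → α) (Y : Ω → β)
    (Z : Ω → γ) : condMI p X Y Z = MI p X Y := by
  have hpair : condH p X (fun ω ↦ (Y ω, Z ω)) = condH p X Y :=
    condH_congr_right p X fun ω ω' ↦ by simp [Subsingleton.elim (Z ω) (Z ω')]
  rw [condMI, MI_eq_Hent_sub_condH, condH_of_subsingleton hp, hpair]

lemma MI_prodMk_right (p : Ω → ℝ) (X : Ω → α) (Y : Ω → β) (Z : Ω → γ) :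
    MI p X (fun ω ↦ (Y ω, Z ω)) = MI p X Z + condMI p X Y Z := by
  simp only [MI_eq_Hent_sub_condH, condMI]
  ring

lemma MI_prodMk_swap_right (p : Ω → ℝ) (X : Ω → α) (Y : Ω → β) (Z : Ω → γ) :
    MI p X (fun ω ↦ (Y ω, Z ω)) = MI p X (fun ω ↦ (Z ω, Y ω)) := by
  have hswap : condH p X (fun ω ↦ (Y ω, Z ω)) = condH p X (fun ω ↦ (Z ω, Y ω)) :=
    condH_congr_right p X fun ω ω' ↦ by simp only [Prod.mk.injEq, and_comm]
  rw [MI_eq_Hent_sub_condH, MI_eq_Hent_sub_condH, hswap]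

lemma condMI_prodMk_middle (p : Ω → ℝ) (X : Ω → α) (Y : Ω → β) (Z : Ω → γ) (W : Ω → δ) :
    condMI p X (fun ω ↦ (Y ω, Z ω)) W = condMI p X Z W + condMI p X Y (fun ω ↦ (Z ω, W ω)) := by
  have hassoc : condH p X (fun ω ↦ ((Y ω, Z ω), W ω)) = condH p X (fun ω ↦ (Y ω, Z ω, W ω)) :=
    condH_congr_right p X fun ω ω' ↦ by simp only [Prod.mk.injEq, and_assoc]
  simp only [condMI, hassoc]
  ring

lemma condMI_prodMk_swap_middle (p : Ω → ℝ) (X : Ω → α) (Y : Ω → β) (Z : Ω → γ) (W : Ω → δ) :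
    condMI p X (fun ω ↦ (Y ω, Z ω)) W = condMI p X (fun ω ↦ (Z ω, Y ω)) W := by
  have hswap : condH p X (fun ω ↦ ((Y ω, Z ω), W ω)) = condH p X (fun ω ↦ ((Z ω, Y ω), W ω)) :=
    condH_congr_right p X fun ω ω' ↦ by simp only [Prod.mk.injEq, and_comm (a := Y ω = Y ω')]
  rw [condMI, condMI, hswap]

lemma MI_prodMk_sub_condMI_sub_condMI (p : Ω → ℝ) (X : Ω → α) (Y : Ω → β) (Z : Ω → γ) :
    MI p Z (fun ω ↦ (X ω, Y ω)) - condMI p Z X Y - condMI p Z Y X =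
      MI p X Y - condMI p X Y Z := by
  have hZ : MI p Z (fun ω ↦ (X ω, Y ω)) = MI p Z X + condMI p Z Y X := by
    rw [MI_prodMk_swap_right, MI_prodMk_right]
  have hX : MI p X Z + condMI p X Y Z = MI p X Y + condMI p X Z Y := by
    rw [← MI_prodMk_right, MI_prodMk_swap_right, MI_prodMk_right]
  rw [MI_comm p X Z, condMI_comm p X Z Y] at hX
  linarith

lemma condMI_eq_neg_sum (hp : ∀ ω, 0 ≤ p ω) (A : Ω → α) (B : Ω → β) (C : Ω → γ) :
    condMI p A B C = -∑ ω, p ω * Real.logb 2 (condIndepRatio p A B C (A ω, B ω, C ω)) := by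
  simp only [condMI, condH, Hent_eq_neg_sum, ← sum_neg_distrib, ← sum_sub_distrib]
  refine sum_congr rfl fun ω _ ↦ ?_
  rcases (hp ω).eq_or_lt with hω | hω
  · simp [← hω]
  have hAC := pr_apply_pos hp (fun ω ↦ (A ω, C ω)) hω
  have hBC := pr_apply_pos hp (fun ω ↦ (B ω, C ω)) hω
  have hABC := pr_apply_pos hp (fun ω ↦ (A ω, B ω, C ω)) hω
  have hC := pr_apply_pos hp C hω
  rw [condIndepRatio, Real.logb_div (by positivity) hABC.ne', Real.logb_div (by positivity) hC.ne',
    Real.logb_mul hAC.ne' hBC.ne']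
  ring

lemma condMI_nonneg (hp : ∀ ω, 0 ≤ p ω) (A : Ω → α) (B : Ω → β) (C : Ω → γ) :
    0 ≤ condMI p A B C := by
  rw [condMI_eq_neg_sum hp, neg_nonneg]
  refine sum_mul_logb_nonpos one_lt_two hp (fun _ ↦ condIndepRatio_apply_pos hp A B C) ?_
  rw [← sum_pr_mul p fun ω ↦ (A ω, B ω, C ω)]
  exact sum_pr_mul_condIndepRatio_le hp A B C

lemma condMI_prodMk_right_le (hp : ∀ ω, 0 ≤ p ω) {X : Ω → α} {Y : Ω → β} {M : Ω → γ} {Q : Ω → δ}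
    (h : CondIndep p M X (fun ω ↦ (Y ω, Q ω))) :
    condMI p X Y (fun ω ↦ (M ω, Q ω)) ≤ condMI p X Y Q := by
  rw [CondIndep, condMI_comm] at h
  calc
    condMI p X Y (fun ω ↦ (M ω, Q ω))
      ≤ condMI p X M Q + condMI p X Y (fun ω ↦ (M ω, Q ω)) :=
        le_add_of_nonneg_left (condMI_nonneg hp X M Q)
    _ = condMI p X Y Q + condMI p X M (fun ω ↦ (Y ω, Q ω)) := by
        rw [← condMI_prodMk_middle, condMI_prodMk_swap_middle, condMI_prodMk_middle]
    _ = condMI p X Y Q := by rw [h, add_zero]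

variable {r : ℕ} {X : Ω → α} {Y : Ω → β} {Msg : Fin r → Ω → γ}

/-- `Msg` is the transcript of a private-coin protocol on inputs `(X, Y)`: given the earlier
messages, each message is sent either by Alice, and then depends on `Y` only through `X`, or by Bob,
and then depends on `X` only through `Y`. The order of the speakers is fixed in advance but
arbitrary. -/
def IsTranscript (p : Ω → ℝ) (X : Ω → α) (Y : Ω → β) (Msg : Fin r → Ω → γ) : Prop :=
  ∀ i : Fin r, CondIndep p (Msg i) Y (fun ω ↦ (X ω, prefixT Msg i i.isLt.le ω)) ∨
    CondIndep p (Msg i) X (fun ω ↦ (Y ω, prefixT Msg i i.isLt.le ω))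

lemma prefixT_succ_eq_iff {Ω γ : Type*} {r : ℕ} (Msg : Fin r → Ω → γ) (t : ℕ) (ht : t < r)
    (ω ω' : Ω) :
    prefixT Msg (t + 1) ht ω = prefixT Msg (t + 1) ht ω' ↔
      (Msg ⟨t, ht⟩ ω, prefixT Msg t ht.le ω) = (Msg ⟨t, ht⟩ ω', prefixT Msg t ht.le ω') := by
  simp only [funext_iff, Prod.mk.injEq, prefixT, Fin.forall_fin_succ']
  exact and_comm

lemma IsTranscript.condMI_prefixT_succ_le (h : IsTranscript p X Y Msg) (hp : ∀ ω, 0 ≤ p ω) (t : ℕ)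
    (ht : t < r) : condMI p X Y (prefixT Msg (t + 1) ht) ≤ condMI p X Y (prefixT Msg t ht.le) := by
  rw [condMI_congr_right p X Y (prefixT_succ_eq_iff Msg t ht)]
  rcases h ⟨t, ht⟩ with hAlice | hBob
  · rw [condMI_comm p X Y, condMI_comm p X Y]
    exact condMI_prodMk_right_le hp hAlice
  · exact condMI_prodMk_right_le hp hBob

lemma IsTranscript.condMI_prefixT_le_MI (h : IsTranscript p X Y Msg) (hp : IsPMF p) (t : ℕ)
    (ht : t ≤ r) : condMI p X Y (prefixT Msg t ht) ≤ MI p X Y := by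
  induction t with
  | zero => exact (condMI_of_subsingleton hp.2 X Y _).le
  | succ t ih => exact (h.condMI_prefixT_succ_le hp.1 t ht).trans (ih (Nat.le_of_succ_le ht))

theorem stmt_13_general (hp : IsPMF p) (h : IsTranscript p X Y Msg) :
    condMI p (prefixT Msg r le_rfl) X Y + condMI p (prefixT Msg r le_rfl) Y X
        ≤ MI p (prefixT Msg r le_rfl) (fun ω ↦ (X ω, Y ω))
    ∧ condMI p X Y (prefixT Msg r le_rfl) ≤ MI p X Y := by
  have hmono := h.condMI_prefixT_le_MI hp r le_rfl
  have hgap := MI_prodMk_sub_condMI_sub_condMI p X Y (prefixT Msg r le_rfl)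
  exact ⟨by linarith, hmono⟩

end Information

/-- If `Π = (Π₁,…,Π_r)` is the transcript of a private-coin protocol on
inputs `(X,Y)` (for odd `t`, `Π_t — (X,Π^{t-1}) — Y`; for even `t`,
`X — (Y,Π^{t-1}) — Π_t`; message 1 is the 0-based index 0, spoken by Alice), then the
internal information cost is at most the external one:
`I(Π;X|Y) + I(Π;Y|X) ≤ I(Π;X,Y)`; equivalently (via the identity
`I(Π;X,Y) - I(Π;X|Y) - I(Π;Y|X) = I(X;Y) - I(X;Y|Π)`) one has the
monotonicity-of-correlation property `I(X;Y|Π) ≤ I(X;Y)`. -/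
theorem stmt_13 {Ω 𝒳 𝒴 γ : Type*} [Fintype Ω] [Fintype 𝒳] [Fintype 𝒴] [Fintype γ]
    [DecidableEq 𝒳] [DecidableEq 𝒴] [DecidableEq γ] {r : ℕ}
    (p : Ω → ℝ) (hp : IsPMF p) (X : Ω → 𝒳) (Y : Ω → 𝒴) (Msg : Fin r → Ω → γ)
    (hodd : ∀ i : Fin r, i.val % 2 = 0 →
      CondIndep p (Msg i) Y (fun ω => (X ω, prefixT Msg i.val i.isLt.le ω)))
    (heven : ∀ i : Fin r, i.val % 2 = 1 →
      CondIndep p (Msg i) X (fun ω => (Y ω, prefixT Msg i.val i.isLt.le ω))) :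
    condMI p (prefixT Msg r le_rfl) X Y + condMI p (prefixT Msg r le_rfl) Y X
        ≤ MI p (prefixT Msg r le_rfl) (fun ω => (X ω, Y ω))
    ∧ condMI p X Y (prefixT Msg r le_rfl) ≤ MI p X Y :=
  stmt_13_general hp fun i ↦ i.val.mod_two_eq_zero_or_one.imp (hodd i) (heven i)

end
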